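/- Suppose m is even. Then w̃_{m+1} lies in the right coset W_{P_1}·w_{m+1}, its defining word is reduced, so ℓ(w̃_{m+1}) = m(m−1)/2, and w̃_{m+1} is the minimal-length representative of this coset: ℓ(w̃_{m+1}) ≤ ℓ(u) for every u ∈ W_{P_1}·w_{m+1}. -/

import Mathlib

/-! Write `T k` for the product of the first `k` factors of the word of
`w̃` and `L k` for the product of the first `k` factors of the word of `w_{m+1}`. Put
`d n = s_n ⋯ s_4 s_3`, so that `T (k+1) = T k · d (k+2) · c_{k+1}` and
`L (k+1) = L k · d (k+2) · s_1 s_2 · d (k+2)⁻¹`.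

*Coset membership.* For `k ≥ 1` the coset `W_{P_1} · T k` is fixed by right multiplication by
`s_3, …, s_{k+1}` and by the element `c_{k+1}` of `{s_1, s_2}` not equal to `c_k`
(`T_fix`). This is an induction on `k` based on the braid identities `d_mul_s`,
`d_mul_fork_mul_three` and `d_fork_d_fork`. Since `s_1 s_2 = c_{k+1} c_{k+2}`, the last factor
`c_{k+2} · d (k+2)⁻¹` of `L (k+1)` is absorbed, and `W_{P_1} L k = W_{P_1} T k` follows by
induction (`T_coset`).

*Length.* `W` acts on sign vectors in the half-spinor manner: `s_j` with `j ≥ 2` exchanges two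
adjacent signs, and `s_1` exchanges and negates the first two. The subgroup `W_{P_1}` fixes the
all-plus vector, and the sum `wt` of the (0-based) positions of the minus signs changes by at
most `1` under each generator. Hence `wt` of the image of the all-plus vector is a lower
bound for the length of every element of a given coset `W_{P_1} u`. For `w̃` the minus signs end
up on `1, …, m-1`, and possibly `0`, so the bound is `m (m-1) / 2`, which is also the
number of letters of the word. -/

namespace FMK3

/-- Entry of the Coxeter matrix of type `D_{m+1}`, with 1-based indices:
nodes `1` and `2` are the two fork ends, both attached to node `3` of the
chain `3 - 4 - ... - (m+1)`. -/
def dEntry (a b : ℕ) : ℕ :=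
  if a = b then 1
  else if (min a b = 1 ∧ max a b = 3) ∨ (min a b = 2 ∧ max a b = 3)
      ∨ (3 ≤ min a b ∧ max a b = min a b + 1) then 3
  else 2

theorem dEntry_symm (a b : ℕ) : dEntry a b = dEntry b a := by
  unfold dEntry
  rw [Nat.min_comm b a, Nat.max_comm b a]
  by_cases h : a = b
  · subst h; rfl
  · have h' : ¬b = a := fun hh => h hh.symm
    rw [if_neg h, if_neg h']

/-- The Coxeter matrix of type `D_{m+1}` on `Fin (m+1)` (index `i` corresponds to the
simple reflection `s_{i+1}` in the 1-based numbering). -/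
def dMatrix (m : ℕ) : CoxeterMatrix (Fin (m + 1)) where
  M := Matrix.of fun i j => dEntry (i.val + 1) (j.val + 1)
  isSymm := Matrix.IsSymm.ext fun i j => dEntry_symm (j.val + 1) (i.val + 1)
  diagonal := fun i => by simp [dEntry]
  off_diagonal := fun i j h => by
    have hab : i.val + 1 ≠ j.val + 1 := fun hh => h (Fin.ext (Nat.succ_injective hh))
    simp only [Matrix.of_apply]
    unfold dEntry
    rw [if_neg hab]
    split <;> omega

/-- The Coxeter group of type `D_{m+1}`. -/
abbrev DGroup (m : ℕ) := (dMatrix m).Group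

/-- The canonical Coxeter system of type `D_{m+1}`. -/
def dcs (m : ℕ) : CoxeterSystem (dMatrix m) (DGroup m) := (dMatrix m).toCoxeterSystem

/-- Conversion from the 1-based index `k` (of the simple reflection `s_k`) to `Fin (m+1)`. -/
def toIdx (m k : ℕ) : Fin (m + 1) := ⟨(k - 1) % (m + 1), Nat.mod_lt _ m.succ_pos⟩

/-- The descending word `[a, a-1, ..., b]` (1-based letters). -/
def desc (a b : ℕ) : List ℕ := (List.range (a + 1 - b)).map (fun t => a - t)

/-- The ascending word `[a, a+1, ..., b]` (1-based letters). -/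
def asc (a b : ℕ) : List ℕ := (List.range (b + 1 - a)).map (fun t => a + t)

/-- The word `(s_2)(s_3 s_2)(s_4 s_3 s_2) ⋯ (s_{m+1} ⋯ s_4 s_3 s_2)` defining `w_1`. -/
def w1Word (m : ℕ) : List ℕ := (List.range m).flatMap (fun j => desc (j + 2) 2)

/-- The word `(s_1 s_2)(s_3 s_1 s_2 s_3) ⋯ (s_m ⋯ s_3 s_1 s_2 s_3 ⋯ s_m)`
defining `w_{m+1}`. -/
def wLastWord (m : ℕ) : List ℕ :=
  (List.range (m - 1)).flatMap (fun j => desc (j + 2) 3 ++ [1, 2] ++ asc 3 (j + 2))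

/-- The word `(s_1)(s_3 s_2)(s_4 s_3 s_1) ⋯ (s_{j+1} ⋯ s_4 s_3 c_j) ⋯` defining `w̃_{m+1}`,
where `c_j = s_1` for odd `j` and `c_j = s_2` for even `j`, `j = 1, ..., m-1`. -/
def wTildeWord (m : ℕ) : List ℕ :=
  (List.range (m - 1)).flatMap
    (fun j => desc (j + 2) 3 ++ [if (j + 1) % 2 = 1 then 1 else 2])

/-- The element of the Coxeter group of type `D_{m+1}` given by a word in the 1-based
letters `s_1, ..., s_{m+1}`. -/
def wp (m : ℕ) (w : List ℕ) : DGroup m := (dcs m).wordProd (w.map (toIdx m))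

/-- The standard parabolic subgroup `W_{P_i}` generated by all simple reflections
except `s_i` (1-based `i`). -/
def WP (m i : ℕ) : Subgroup (DGroup m) :=
  Subgroup.closure ((dcs m).simple '' {j | j ≠ toIdx m i})


/-! ### Words, products and the relations of type `D` -/

/-- The simple reflection `s_k`, with its 1-based index. -/
def s (m k : ℕ) : DGroup m := (dcs m).simple (toIdx m k)

/-- The element `s_n ⋯ s_4 s_3`; it is `1` for `n ≤ 2`. -/
def d (m n : ℕ) : DGroup m := wp m (desc n 3)

/-- The element `c_j`, equal to `s_1` for odd `j` and to `s_2` for even `j`. -/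
def fork (m j : ℕ) : DGroup m := s m (if j % 2 = 1 then 1 else 2)

/-- The product of the first `k` factors of the word of `w̃_{m+1}`. -/
def T (m : ℕ) : ℕ → DGroup m
  | 0 => 1
  | k + 1 => T m k * d m (k + 2) * fork m (k + 1)

/-- The product of the first `k` factors of the word of `w_{m+1}`. -/
def L (m : ℕ) : ℕ → DGroup m
  | 0 => 1
  | k + 1 => L m k * d m (k + 2) * (s m 1 * s m 2) * (d m (k + 2))⁻¹

theorem wp_nil (m : ℕ) : wp m [] = 1 := by simp [wp]

theorem wp_cons (m a : ℕ) (w : List ℕ) : wp m (a :: w) = s m a * wp m w := by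
  simp [wp, s, CoxeterSystem.wordProd_cons]

theorem wp_append (m : ℕ) (w w' : List ℕ) : wp m (w ++ w') = wp m w * wp m w' := by
  simp [wp, CoxeterSystem.wordProd_append]

theorem wp_reverse (m : ℕ) (w : List ℕ) : wp m w.reverse = (wp m w)⁻¹ := by
  simp [wp]

theorem desc_succ (n : ℕ) (hn : 2 ≤ n) : desc (n + 1) 3 = (n + 1) :: desc n 3 := by
  obtain ⟨k, rfl⟩ := Nat.exists_eq_add_of_le hn
  have h1 : 2 + k + 1 + 1 - 3 = k + 1 := by omega
  have h2 : 2 + k + 1 - 3 = k := by omega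
  simp only [desc, h1, h2, List.range_succ_eq_map, List.map_cons, List.map_map]
  congr 1
  apply List.map_congr_left
  intro t _
  simp only [Function.comp]
  omega

theorem asc_eq (n : ℕ) (hn : 2 ≤ n) : asc 3 n = (desc n 3).reverse := by
  induction n, hn using Nat.le_induction with
  | base => rfl
  | succ n hn ih =>
    rw [desc_succ n hn, List.reverse_cons, ← ih]
    obtain ⟨k, rfl⟩ := Nat.exists_eq_add_of_le hn
    have h1 : 2 + k + 1 + 1 - 3 = k + 1 := by omega
    have h2 : 2 + k + 1 - 3 = k := by omega
    simp only [asc, h1, h2, List.range_succ, List.map_append, List.map_cons, List.map_nil]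
    congr 2
    omega

theorem d_two (m : ℕ) : d m 2 = 1 := wp_nil m

theorem d_succ (m n : ℕ) (hn : 2 ≤ n) : d m (n + 1) = s m (n + 1) * d m n := by
  rw [d, desc_succ n hn, wp_cons, d]

theorem wp_tilde (m : ℕ) : wp m (wTildeWord m) = T m (m - 1) := by
  unfold wTildeWord
  induction m - 1 with
  | zero => exact wp_nil m
  | succ k ih =>
    rw [List.range_succ, List.flatMap_append, wp_append, ih, T, List.flatMap_singleton,
      wp_append, wp_cons, wp_nil, mul_one, ← mul_assoc]
    rfl

theorem wp_last (m : ℕ) : wp m (wLastWord m) = L m (m - 1) := by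
  unfold wLastWord
  induction m - 1 with
  | zero => exact wp_nil m
  | succ k ih =>
    rw [List.range_succ, List.flatMap_append, wp_append, ih, L, List.flatMap_singleton,
      wp_append, wp_append, wp_cons, wp_cons, wp_nil, mul_one, asc_eq _ (by omega), wp_reverse]
    simp only [mul_assoc, d]

theorem length_tilde (m : ℕ) : (wTildeWord m).length = m * (m - 1) / 2 := by
  have key : ∀ k, ((List.range k).flatMap (fun j => desc (j + 2) 3 ++
      [if (j + 1) % 2 = 1 then 1 else 2])).length = ∑ i ∈ Finset.range (k + 1), i := by
    intro k
    induction k with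
    | zero => rfl
    | succ k ih =>
      rw [List.range_succ, List.flatMap_append, List.length_append, ih,
        Finset.sum_range_succ _ (k + 1)]
      simp [desc]
  rw [wTildeWord, key, ← Finset.sum_range_id_mul_two]
  rcases m with _ | m
  · rfl
  · simp

theorem s_mul_self (m k : ℕ) : s m k * s m k = 1 := (dcs m).simple_mul_simple_self _

theorem s_inv (m k : ℕ) : (s m k)⁻¹ = s m k := (dcs m).inv_simple _

theorem toIdx_val (m k : ℕ) (h1 : 1 ≤ k) (h2 : k ≤ m + 1) : (toIdx m k).val + 1 = k := by
  simp only [toIdx]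
  rw [Nat.mod_eq_of_lt (by omega)]
  omega

theorem s_rel (m i j : ℕ) (hi : 1 ≤ i) (hi' : i ≤ m + 1) (hj : 1 ≤ j) (hj' : j ≤ m + 1) :
    (s m i * s m j) ^ dEntry i j = 1 := by
  have h := (dcs m).simple_mul_simple_pow (toIdx m i) (toIdx m j)
  have e : (dMatrix m).M (toIdx m i) (toIdx m j) = dEntry i j := by
    simp only [dMatrix, Matrix.of_apply]
    rw [toIdx_val m i hi hi', toIdx_val m j hj hj']
  rwa [e] at h

theorem s_comm (m i j : ℕ) (hi : 1 ≤ i) (hi' : i ≤ m + 1) (hj : 1 ≤ j) (hj' : j ≤ m + 1)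
    (h : dEntry i j = 2) : s m i * s m j = s m j * s m i := by
  have := s_rel m i j hi hi' hj hj'
  rw [h, pow_two] at this
  have h2 := eq_inv_of_mul_eq_one_left this
  rwa [mul_inv_rev, s_inv, s_inv] at h2

theorem s_braid (m i j : ℕ) (hi : 1 ≤ i) (hi' : i ≤ m + 1) (hj : 1 ≤ j) (hj' : j ≤ m + 1)
    (h : dEntry i j = 3) : s m i * s m j * s m i = s m j * s m i * s m j := by
  have := s_rel m i j hi hi' hj hj'
  rw [h] at this
  have h1 : (s m i * s m j * s m i) * (s m j * s m i * s m j) = 1 := by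
    rw [← this]; simp only [pow_succ, pow_zero, one_mul, mul_assoc]
  have h2 := eq_inv_of_mul_eq_one_left h1
  rwa [mul_inv_rev, mul_inv_rev, s_inv, s_inv, ← mul_assoc] at h2

theorem dEntry_far (i j : ℕ) (hj : 4 ≤ j) (h : i + 2 ≤ j) : dEntry i j = 2 := by
  unfold dEntry
  split_ifs <;> omega

theorem s_comm_far (m i j : ℕ) (hi : 1 ≤ i) (hj : 4 ≤ j) (h : i + 2 ≤ j) (hj' : j ≤ m + 1) :
    s m i * s m j = s m j * s m i :=
  s_comm m i j hi (by omega) (by omega) hj' (dEntry_far i j hj h)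

theorem s_braid_succ (m i : ℕ) (hi : 3 ≤ i) (hj' : i + 1 ≤ m + 1) :
    s m i * s m (i + 1) * s m i = s m (i + 1) * s m i * s m (i + 1) :=
  s_braid m i (i + 1) (by omega) (by omega) (by omega) hj' (by
    unfold dEntry; split_ifs <;> omega)

theorem fork_comm_far (m e j : ℕ) (hj : 4 ≤ j) (hj' : j ≤ m + 1) :
    fork m e * s m j = s m j * fork m e := by
  unfold fork
  split_ifs
  · exact s_comm_far m 1 j (by omega) hj (by omega) hj'
  · exact s_comm_far m 2 j (by omega) hj (by omega) hj'

theorem fork_braid (m e : ℕ) (hm : 2 ≤ m) :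
    fork m e * s m 3 * fork m e = s m 3 * fork m e * s m 3 := by
  unfold fork
  split_ifs
  · exact s_braid m 1 3 (by omega) (by omega) (by omega) (by omega) rfl
  · exact s_braid m 2 3 (by omega) (by omega) (by omega) (by omega) rfl

theorem fork_comm (m e : ℕ) (hm : 1 ≤ m) :
    fork m (e + 1) * fork m e = fork m e * fork m (e + 1) := by
  have h := s_comm m 1 2 (by omega) (by omega) (by omega) (by omega) rfl
  unfold fork
  rcases Nat.mod_two_eq_zero_or_one e with h0 | h0
  · rw [if_pos (by omega), if_neg (by omega)]; exact h
  · rw [if_neg (by omega), if_pos (by omega)]; exact h.symm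

theorem fork_mul_succ (m e : ℕ) (hm : 1 ≤ m) :
    fork m e * fork m (e + 1) = s m 1 * s m 2 := by
  have h := s_comm m 1 2 (by omega) (by omega) (by omega) (by omega) rfl
  unfold fork
  rcases Nat.mod_two_eq_zero_or_one e with h0 | h0
  · rw [if_neg (by omega), if_pos (by omega)]; exact h.symm
  · rw [if_pos (by omega), if_neg (by omega)]

theorem fork_add_two (m e : ℕ) : fork m (e + 2) = fork m e := by
  unfold fork; simp

/-! ### Braid identities for `d n = s_n ⋯ s_3` -/

theorem d_comm_far (m n j : ℕ) (hn : 2 ≤ n) (h : n + 2 ≤ j) (hj : j ≤ m + 1) :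
    d m n * s m j = s m j * d m n := by
  induction n, hn using Nat.le_induction with
  | base => simp [d_two]
  | succ n hn ih =>
    rw [d_succ m n hn, mul_assoc, ih (by omega), ← mul_assoc,
      s_comm_far m (n + 1) j (by omega) (by omega) (by omega) hj, mul_assoc]

/-- Moving a generator from the right of `d n` to its left lowers its index by one. -/
theorem d_mul_s (m n i : ℕ) (hi : 3 ≤ i) (hn : i + 1 ≤ n) (hm : n ≤ m + 1) :
    d m n * s m (i + 1) = s m i * d m n := by
  induction n, hn using Nat.le_induction with
  | base =>
    obtain ⟨k, rfl⟩ : ∃ k, i = k + 1 := ⟨i - 1, by omega⟩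
    rw [d_succ m (k + 1) (by omega), d_succ m k (by omega)]
    have h1 := d_comm_far m k (k + 1 + 1) (by omega) (by omega) hm
    have h2 := s_braid_succ m (k + 1) hi hm
    calc _ = s m (k + 1 + 1) * s m (k + 1) * (d m k * s m (k + 1 + 1)) := by
            simp only [mul_assoc]
      _ = (s m (k + 1 + 1) * s m (k + 1) * s m (k + 1 + 1)) * d m k := by
            rw [h1]; simp only [mul_assoc]
      _ = _ := by rw [← h2]; simp only [mul_assoc]
  | succ n hn ih =>
    rw [d_succ m n (by omega), mul_assoc, ih (by omega), ← mul_assoc,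
      ← s_comm_far m i (n + 1) (by omega) (by omega) (by omega) hm, mul_assoc]

theorem d_mul_fork_mul_three (m n e : ℕ) (hn : 3 ≤ n) (hm : n ≤ m + 1) :
    d m n * fork m e * s m 3 = fork m e * d m n * fork m e := by
  induction n, hn using Nat.le_induction with
  | base =>
    rw [d_succ m 2 le_rfl, d_two, mul_one, fork_braid m e (by omega)]
  | succ n hn ih =>
    rw [d_succ m n (by omega), mul_assoc, mul_assoc, ← mul_assoc (d m n), ih (by omega),
      ← mul_assoc, ← mul_assoc, ← fork_comm_far m e (n + 1) (by omega) hm]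
    simp only [mul_assoc]

/-- A final `s_1` (or `s_2`) after two consecutive descending factors turns into `s_{n+1}`
on the left. -/
theorem d_fork_d_fork (m n e : ℕ) (hn : 2 ≤ n) (hm : n + 1 ≤ m + 1) :
    d m n * fork m e * d m (n + 1) * fork m e
      = s m (n + 1) * (d m n * fork m e * d m (n + 1)) := by
  induction n, hn using Nat.le_induction with
  | base =>
    rw [d_succ m 2 le_rfl, d_two, mul_one, one_mul, fork_braid m e (by omega), mul_assoc]
  | succ n hn ih =>
    have ih := ih (by omega)
    have h1 := d_comm_far m n (n + 1 + 1) hn (by omega) hm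
    have h2 := fork_comm_far m e (n + 1 + 1) (by omega) hm
    have h3 := s_braid_succ m (n + 1) (by omega) hm
    -- `s_{n+2}` passes through `d n * fork e`, which has letters of index at most `n`.
    have h4 : d m n * fork m e * s m (n + 1 + 1) = s m (n + 1 + 1) * (d m n * fork m e) := by
      rw [mul_assoc, h2, ← mul_assoc, h1, mul_assoc]
    calc d m (n + 1) * fork m e * d m (n + 1 + 1) * fork m e
        = s m (n + 1) * (d m n * fork m e * s m (n + 1 + 1)) * d m (n + 1) * fork m e := by
          rw [d_succ m (n + 1) (by omega), d_succ m n hn]; simp only [mul_assoc]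
      _ = s m (n + 1) * s m (n + 1 + 1) * (d m n * fork m e * d m (n + 1) * fork m e) := by
          rw [h4]; simp only [mul_assoc]
      _ = (s m (n + 1) * s m (n + 1 + 1) * s m (n + 1)) * (d m n * fork m e * d m (n + 1)) := by
          rw [ih]; simp only [mul_assoc]
      _ = s m (n + 1 + 1) * s m (n + 1) * (s m (n + 1 + 1) * (d m n * fork m e))
            * d m (n + 1) := by
          rw [h3]; simp only [mul_assoc]
      _ = _ := by
          rw [← h4, d_succ m (n + 1) (by omega), d_succ m n hn]; simp only [mul_assoc]

/-! ### The coset of `w̃` -/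

theorem s_mem_WP (m k : ℕ) (h1 : 2 ≤ k) (h2 : k ≤ m + 1) : s m k ∈ WP m 1 := by
  apply Subgroup.subset_closure
  refine ⟨toIdx m k, ?_, rfl⟩
  intro h
  have e1 := toIdx_val m k (by omega) h2
  have e2 := toIdx_val m 1 le_rfl (by omega)
  rw [h] at e1
  omega

theorem T_comm_far (m k j : ℕ) (h : k + 3 ≤ j) (hj : j ≤ m + 1) :
    T m k * s m j = s m j * T m k := by
  induction k with
  | zero => simp [T]
  | succ k ih =>
    rw [T, mul_assoc, fork_comm_far m _ j (by omega) hj, ← mul_assoc, mul_assoc (T m k),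
      d_comm_far m (k + 2) j (by omega) (by omega) hj, ← mul_assoc, ih (by omega)]
    simp only [mul_assoc]

/-- The coset `W_{P_1} g` is fixed by right multiplication by `x`. -/
def Fix (m : ℕ) (g x : DGroup m) : Prop := ∃ h ∈ WP m 1, g * x = h * g

theorem Fix.mul {m : ℕ} {g x y : DGroup m} (hx : Fix m g x) (hy : Fix m g y) :
    Fix m g (x * y) := by
  obtain ⟨h, hh, e⟩ := hx
  obtain ⟨h', hh', e'⟩ := hy
  exact ⟨h * h', mul_mem hh hh', by rw [← mul_assoc, e, mul_assoc, e', mul_assoc]⟩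

theorem Fix.inv {m : ℕ} {g x : DGroup m} (hx : Fix m g x) : Fix m g x⁻¹ := by
  obtain ⟨h, hh, e⟩ := hx
  exact ⟨h⁻¹, inv_mem hh, by rw [mul_inv_eq_iff_eq_mul, mul_assoc, e, inv_mul_cancel_left]⟩

/-- Transport of fixedness along an intertwining relation `y * x = x' * y`. -/
theorem Fix.of_conj {m : ℕ} {g x x' y : DGroup m} (hx : Fix m g x') (e : y * x = x' * y) :
    Fix m (g * y) x := by
  obtain ⟨h, hh, e'⟩ := hx
  exact ⟨h, hh, by rw [mul_assoc, e, ← mul_assoc, e', mul_assoc]⟩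

theorem T_fix (m k : ℕ) (hk : k + 2 ≤ m + 1) :
    Fix m (T m (k + 1)) (fork m (k + 2)) ∧
      ∀ i, 3 ≤ i → i ≤ k + 2 → Fix m (T m (k + 1)) (s m i) := by
  induction k with
  | zero =>
    refine ⟨⟨s m 2, s_mem_WP m 2 le_rfl (by omega), ?_⟩, fun i h1 h2 => by omega⟩
    have h := s_comm m 1 2 (by omega) (by omega) (by omega) (by omega) rfl
    have hd : d m (0 + 2) = 1 := d_two m
    simp only [T, hd, one_mul, fork]
    simpa using h
  | succ k ih =>
    obtain ⟨ih1, ih2⟩ := ih (by omega)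
    refine ⟨⟨s m (k + 3), s_mem_WP m _ (by omega) (by omega), ?_⟩, fun i h1 h2 => ?_⟩
    · have h1 := d_fork_d_fork m (k + 2) (k + 1) (by omega) (by omega)
      have h2 := T_comm_far m k (k + 3) le_rfl (by omega)
      have h3 := fork_comm m (k + 1) (by omega)
      rw [fork_add_two m (k + 1)]
      simp only [T]
      calc _ = T m k * (d m (k + 2) * fork m (k + 1) * d m (k + 2 + 1) *
                (fork m (k + 1 + 1) * fork m (k + 1))) := by simp only [mul_assoc]
        _ = T m k * (d m (k + 2) * fork m (k + 1) * d m (k + 2 + 1) * fork m (k + 1)) *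
              fork m (k + 1 + 1) := by rw [h3]; simp only [mul_assoc]
        _ = (T m k * s m (k + 3)) * (d m (k + 2) * fork m (k + 1) * d m (k + 2 + 1)) *
              fork m (k + 1 + 1) := by rw [h1]; simp only [mul_assoc]
        _ = _ := by rw [h2]; simp only [mul_assoc]
    · rw [T, mul_assoc]
      rcases Nat.lt_or_ge i 4 with hi | hi
      · obtain rfl : i = 3 := by omega
        refine Fix.of_conj ih1 ?_
        rw [d_mul_fork_mul_three m _ _ (by omega) (by omega), mul_assoc]
      · obtain ⟨j, rfl⟩ : ∃ j, i = j + 1 := ⟨i - 1, by omega⟩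
        refine Fix.of_conj (ih2 j (by omega) (by omega)) ?_
        rw [mul_assoc, fork_comm_far m _ _ hi (by omega), ← mul_assoc,
          d_mul_s m _ j (by omega) (by omega) (by omega), mul_assoc]

theorem fix_d (m n : ℕ) (g : DGroup m) (hn : 2 ≤ n)
    (h : ∀ i, 3 ≤ i → i ≤ n → Fix m g (s m i)) : Fix m g (d m n) := by
  induction n, hn using Nat.le_induction with
  | base => exact ⟨1, one_mem _, by simp [d_two]⟩
  | succ n hn ih =>
    rw [d_succ m n hn]
    exact (h _ (by omega) le_rfl).mul (ih fun i h1 h2 => h i h1 (by omega))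

theorem T_coset (m k : ℕ) (hk : k + 1 ≤ m + 1) : ∃ h ∈ WP m 1, T m k = h * L m k := by
  induction k with
  | zero => exact ⟨1, one_mem _, by simp [T, L]⟩
  | succ k ih =>
    obtain ⟨h, hh, e⟩ := ih (by omega)
    obtain ⟨f1, f2⟩ := T_fix m k (by omega)
    obtain ⟨h', hh', e'⟩ := f1.mul (fix_d m (k + 2) _ (by omega) f2).inv
    refine ⟨h'⁻¹ * h, mul_mem (inv_mem hh') hh, ?_⟩
    have : h' * T m (k + 1) = h * L m (k + 1) := by
      rw [← e', L, ← fork_mul_succ m (k + 1) (by omega), T, e]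
      simp only [mul_assoc]
    rw [mul_assoc, ← this, inv_mul_cancel_left]

/-! ### The half-spinor action on sign vectors -/

/-- The permutation of the 0-based positions underlying `s_k`: it exchanges `k - 2` and
`k - 1`. With truncated subtraction, `k = 1` gives the exchange of `0` and `1`. -/
def pos (k i : ℕ) : ℕ := if i = k - 2 then k - 2 + 1 else if i = k - 2 + 1 then k - 2 else i

/-- Action of `s_k` on sign vectors, where `true` stands for a minus sign and coordinates are
0-based: `s_1` exchanges and negates the coordinates `0` and `1`, and `s_k` with `k ≥ 2`
exchanges the coordinates `k - 2` and `k - 1`. -/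
def spin (k : ℕ) (v : ℕ → Bool) (i : ℕ) : Bool :=
  (decide (k = 1 ∧ i ≤ 1)).xor (v (pos k i))

theorem pos_pos (k i : ℕ) : pos k (pos k i) = i := by
  unfold pos; split_ifs <;> omega

theorem pos_one_le (i : ℕ) : pos 1 i ≤ 1 ↔ i ≤ 1 := by
  unfold pos; split_ifs <;> omega

theorem pos_le (k i : ℕ) (h : k ≠ 3) : pos k i ≤ 1 ↔ i ≤ 1 := by
  unfold pos; split_ifs <;> omega

theorem spin_spin (k : ℕ) (v : ℕ → Bool) : spin k (spin k v) = v := by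
  funext i
  simp only [spin, pos_pos]
  by_cases h : k = 1
  · subst h; simp [pos_one_le]
  · simp [h]

theorem spin_comm (a b : ℕ) (h : (a = 1 ∧ b = 2) ∨ (1 ≤ a ∧ a + 2 ≤ b ∧ 4 ≤ b))
    (v : ℕ → Bool) : spin a (spin b v) = spin b (spin a v) := by
  funext i
  have e : pos b (pos a i) = pos a (pos b i) := by
    unfold pos; split_ifs <;> omega
  have h1 := pos_le b i (by omega)
  have h2 : b ≠ 1 := by omega
  simp [spin, e, h1, h2]

theorem spin_braid (a b : ℕ) (h : (a = 1 ∧ b = 3) ∨ (2 ≤ a ∧ b = a + 1)) (v : ℕ → Bool) :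
    spin a (spin b (spin a v)) = spin b (spin a (spin b v)) := by
  funext i
  rcases h with ⟨rfl, rfl⟩ | ⟨h, rfl⟩
  · rcases i with _ | _ | _ | i <;> simp [spin, pos]
  · obtain ⟨p, rfl⟩ : ∃ p, a = p + 2 := ⟨a - 2, by omega⟩
    have e : pos (p + 2) (pos (p + 2 + 1) (pos (p + 2) i))
        = pos (p + 2 + 1) (pos (p + 2) (pos (p + 2 + 1) i)) := by
      have e1 : p + 2 + 1 - 2 = p + 1 := by omega
      have n1 : p ≠ p + 1 + 1 := by omega
      simp only [pos, e1, Nat.add_sub_cancel]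
      by_cases h1 : i = p
      · simp [h1, n1, n1.symm]
      by_cases h2 : i = p + 1
      · simp [h2, n1, n1.symm]
      by_cases h3 : i = p + 1 + 1
      · simp [h3, n1, n1.symm]
      simp [h1, h2, h3]
    simp [spin, e]

theorem spin_add_two (q : ℕ) (v : ℕ → Bool) (i : ℕ) :
    spin (q + 2) v i = if i = q then v (q + 1) else if i = q + 1 then v q else v i := by
  simp only [spin, pos, Nat.add_sub_cancel]
  split_ifs <;> simp

/-- The action of `s_{k+1}` as a permutation of the sign vectors. -/
def spinPerm (k : ℕ) : Equiv.Perm (ℕ → Bool) where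
  toFun := spin (k + 1)
  invFun := spin (k + 1)
  left_inv := spin_spin _
  right_inv := spin_spin _

theorem spin_rel_two (a b : ℕ) (ha : 1 ≤ a) (hb : 1 ≤ b) (h : dEntry a b = 2) (v : ℕ → Bool) :
    spin a (spin b (spin a (spin b v))) = v := by
  have h' : ((a = 1 ∧ b = 2) ∨ (1 ≤ a ∧ a + 2 ≤ b ∧ 4 ≤ b)) ∨
      ((b = 1 ∧ a = 2) ∨ (1 ≤ b ∧ b + 2 ≤ a ∧ 4 ≤ a)) := by
    unfold dEntry at h
    split_ifs at h <;> omega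
  rcases h' with h' | h'
  · rw [spin_comm a b h', spin_spin, spin_spin]
  · rw [← spin_comm b a h', spin_spin, spin_spin]

theorem spin_rel_three (a b : ℕ) (ha : 1 ≤ a) (hb : 1 ≤ b) (h : dEntry a b = 3)
    (v : ℕ → Bool) : spin a (spin b (spin a (spin b (spin a (spin b v))))) = v := by
  have h' : ((a = 1 ∧ b = 3) ∨ (2 ≤ a ∧ b = a + 1)) ∨
      ((b = 1 ∧ a = 3) ∨ (2 ≤ b ∧ a = b + 1)) := by
    unfold dEntry at h
    split_ifs at h <;> omega
  rcases h' with h' | h'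
  · rw [spin_braid a b h', spin_spin, spin_spin, spin_spin]
  · rw [← spin_braid b a h', spin_spin, spin_spin, spin_spin]

/-- The homomorphism giving the half-spinor action of `W` on sign vectors. -/
def act (m : ℕ) : DGroup m →* Equiv.Perm (ℕ → Bool) :=
  (dcs m).lift ⟨fun i => spinPerm i.val, by
    intro i j
    have hM : (dMatrix m).M i j = dEntry (i.val + 1) (j.val + 1) := rfl
    rw [hM]
    have h3 : dEntry (i.val + 1) (j.val + 1) = 1 ∧ i.val = j.val ∨
        dEntry (i.val + 1) (j.val + 1) = 2 ∨ dEntry (i.val + 1) (j.val + 1) = 3 := by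
      unfold dEntry
      split_ifs <;> omega
    rcases h3 with ⟨h, e⟩ | h | h
    · obtain rfl : i = j := Fin.ext e
      rw [h, pow_one]
      ext1 v
      exact spin_spin _ v
    · rw [h]
      ext1 v
      exact spin_rel_two _ _ (by omega) (by omega) h v
    · rw [h]
      ext1 v
      exact spin_rel_three _ _ (by omega) (by omega) h v⟩

theorem act_simple (m : ℕ) (i : Fin (m + 1)) :
    act m ((dcs m).simple i) = spinPerm i.val :=
  (dcs m).lift_apply_simple _ i

/-- The right action `v · u` of a group element on a sign vector. -/
def ract (m : ℕ) (v : ℕ → Bool) (u : DGroup m) : ℕ → Bool := (act m u)⁻¹ v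

theorem ract_mul (m : ℕ) (v : ℕ → Bool) (u u' : DGroup m) :
    ract m v (u * u') = ract m (ract m v u) u' := by
  simp [ract, mul_inv_rev]

theorem ract_one (m : ℕ) (v : ℕ → Bool) : ract m v 1 = v := by
  simp [ract]

theorem ract_simple (m : ℕ) (v : ℕ → Bool) (i : Fin (m + 1)) :
    ract m v ((dcs m).simple i) = spin (i.val + 1) v := by
  rw [ract, act_simple]
  rfl

theorem ract_s (m k : ℕ) (v : ℕ → Bool) (h1 : 1 ≤ k) (h2 : k ≤ m + 1) :
    ract m v (s m k) = spin k v := by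
  rw [s, ract_simple, toIdx_val m k h1 h2]

/-- The sum of the 0-based positions at most `m` of the minus signs. -/
def wt (m : ℕ) (v : ℕ → Bool) : ℕ := ∑ i ∈ Finset.range (m + 1), if v i then i else 0

theorem wt_spin_le (m k : ℕ) (hm : 1 ≤ m) (hk : k ≤ m) (v : ℕ → Bool) :
    wt m (spin (k + 1) v) ≤ wt m v + 1 := by
  -- Only the positions `p` and `p + 1` change; the remaining part of the sum is common.
  obtain ⟨p, hp'⟩ : ∃ p, p = k + 1 - 2 := ⟨_, rfl⟩
  have hp : p + 1 ≤ m := by omega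
  have split : ∀ w : ℕ → Bool, wt m w = (if w p then p else 0) + ((if w (p + 1) then p + 1 else 0)
      + ∑ i ∈ ((Finset.range (m + 1)).erase p).erase (p + 1), if w i then i else 0) := by
    intro w
    rw [wt, ← Finset.add_sum_erase _ _ (show p ∈ Finset.range (m + 1) by simp; omega),
      ← Finset.add_sum_erase _ _
        (show p + 1 ∈ (Finset.range (m + 1)).erase p by simp; omega)]
  have rest : ∑ i ∈ ((Finset.range (m + 1)).erase p).erase (p + 1),
      (if spin (k + 1) v i then i else 0)
      = ∑ i ∈ ((Finset.range (m + 1)).erase p).erase (p + 1), if v i then i else 0 := by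
    apply Finset.sum_congr rfl
    intro i hi
    simp only [Finset.mem_erase] at hi
    have : spin (k + 1) v i = v i := by
      have h1 : ¬ (k = 0 ∧ i ≤ 1) := by omega
      have h2 : i ≠ p ∧ i ≠ p + 1 := by omega
      simp [spin, pos, ← hp', h1, h2]
    rw [this]
  rw [split, split v, rest]
  have : (if spin (k + 1) v p then p else 0) + (if spin (k + 1) v (p + 1) then p + 1 else 0)
      ≤ (if v p then p else 0) + (if v (p + 1) then p + 1 else 0) + 1 := by
    have e1 : pos (k + 1) p = p + 1 := by simp [pos, ← hp']
    have e2 : pos (k + 1) (p + 1) = p := by simp [pos, ← hp']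
    simp only [spin, e1, e2]
    rcases Nat.eq_zero_or_pos k with hk0 | hk0
    · obtain rfl : p = 0 := by omega
      cases v 0 <;> cases v 1 <;> simp [hk0]
    · have hk1 : k ≠ 0 := by omega
      cases v p <;> cases v (p + 1) <;> (simp [hk1]; try omega)
  omega

theorem wt_le_length (m : ℕ) (hm : 1 ≤ m) (u : DGroup m) :
    wt m (ract m (fun _ => false) u) ≤ (dcs m).length u := by
  obtain ⟨w, hw, rfl⟩ := (dcs m).exists_isReduced u
  rw [hw]
  clear hw
  induction w using List.reverseRecOn with
  | nil => simp [ract_one, wt]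
  | append_singleton w i ih =>
    rw [(dcs m).wordProd_append, (dcs m).wordProd_singleton, ract_mul, ract_simple,
      List.length_append, List.length_singleton]
    exact (wt_spin_le m i.val hm (by omega) _).trans (by omega)

theorem ract_WP (m : ℕ) (h : DGroup m) (hh : h ∈ WP m 1) :
    ract m (fun _ => false) h = fun _ => false := by
  induction hh using Subgroup.closure_induction with
  | mem x hx =>
    obtain ⟨i, hi, rfl⟩ := hx
    have h0 : i.val ≠ 0 := fun h => hi (Fin.ext (by simp [toIdx, h]))
    rw [ract_simple]
    funext j
    simp [spin, h0]
  | one => exact ract_one m _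
  | mul x y _ _ hx hy => rw [ract_mul, hx, hy]
  | inv x _ hx => rw [← hx, ← ract_mul, mul_inv_cancel, ract_one, hx]

theorem ract_d (m n : ℕ) (hn : 2 ≤ n) (hm : n ≤ m + 1) (v : ℕ → Bool) :
    ract m v (d m n) = fun i =>
      if i = 1 then v (n - 1) else if 2 ≤ i ∧ i + 1 ≤ n then v (i - 1) else v i := by
  induction n, hn using Nat.le_induction generalizing v with
  | base =>
    rw [d_two, ract_one]
    funext i
    grind
  | succ n hn ih =>
    obtain ⟨q, rfl⟩ : ∃ q, n = q + 2 := ⟨n - 2, by omega⟩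
    rw [d_succ m (q + 2) hn, ract_mul, ih (by omega), ract_s m _ _ (by omega) hm]
    funext i
    have e := spin_add_two (q + 1) v
    simp only [show q + 2 + 1 = q + 1 + 2 by omega, e]
    grind

/-- The minus signs of the image of the all-plus vector under `T k` are at `1, …, k`, and
also at `0` when `k` is odd. -/
theorem ract_T (m k : ℕ) (hk : k + 1 ≤ m + 1) :
    ract m (fun _ => false) (T m k)
      = fun i => decide ((1 ≤ i ∧ i ≤ k) ∨ (i = 0 ∧ k % 2 = 1)) := by
  induction k with
  | zero =>
    rw [T, ract_one]
    funext i
    grind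
  | succ k ih =>
    rw [T, ract_mul, ract_mul, ih (by omega), ract_d m _ (by omega) (by omega), fork,
      ract_s m _ _ (by split_ifs <;> omega) (by split_ifs <;> omega)]
    funext i
    simp only [spin, pos]
    grind

theorem wt_T (m : ℕ) (hm : 1 ≤ m) :
    wt m (ract m (fun _ => false) (T m (m - 1))) = m * (m - 1) / 2 := by
  rw [ract_T m _ (by omega), wt, ← Finset.sum_range_id, Finset.sum_range_succ]
  have hz : (if decide ((1 ≤ m ∧ m ≤ m - 1) ∨ (m = 0 ∧ (m - 1) % 2 = 1)) = true
      then m else 0) = 0 := by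
    grind
  rw [hz, add_zero]
  apply Finset.sum_congr rfl
  intro i hi
  rw [Finset.mem_range] at hi
  grind

/-- For even `m`: `w̃_{m+1}` lies in the right coset `W_{P_1} · w_{m+1}`, its defining
word is reduced (so `ℓ(w̃_{m+1}) = m(m−1)/2`), and `w̃_{m+1}` is the minimal-length
representative of this coset. -/
theorem statement1 (m : ℕ) (hm : 3 ≤ m) (hpar : Even m) :
    (∃ h ∈ WP m 1, wp m (wTildeWord m) = h * wp m (wLastWord m)) ∧
    (dcs m).IsReduced ((wTildeWord m).map (toIdx m)) ∧
    (dcs m).length (wp m (wTildeWord m)) = m * (m - 1) / 2 ∧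
    ∀ u : DGroup m, (∃ h ∈ WP m 1, u = h * wp m (wLastWord m)) →
      (dcs m).length (wp m (wTildeWord m)) ≤ (dcs m).length u := by
  have hcoset : ∃ h ∈ WP m 1, wp m (wTildeWord m) = h * wp m (wLastWord m) := by
    rw [wp_tilde, wp_last]
    exact T_coset m (m - 1) (by omega)
  have hupper : (dcs m).length (wp m (wTildeWord m)) ≤ m * (m - 1) / 2 := by
    have h := (dcs m).length_wordProd_le ((wTildeWord m).map (toIdx m))
    rwa [List.length_map, length_tilde] at h
  -- The image of the all-plus vector only depends on the coset, so its weight bounds the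
  -- length of every representative from below.
  have hlower : ∀ u : DGroup m, (∃ h ∈ WP m 1, u = h * wp m (wLastWord m)) →
      m * (m - 1) / 2 ≤ (dcs m).length u := by
    rintro u ⟨h, hh, rfl⟩
    obtain ⟨h', hh', e⟩ := hcoset
    have h1 := wt_le_length m (by omega) (h * wp m (wLastWord m))
    have h2 := wt_T m (by omega)
    rw [← wp_tilde, e, ract_mul, ract_WP m h' hh'] at h2
    rwa [ract_mul, ract_WP m h hh, h2] at h1
  have hlen := le_antisymm hupper (hlower _ hcoset)
  refine ⟨hcoset, ?_, hlen, fun u hu => hlen.trans_le (hlower u hu)⟩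
  rw [CoxeterSystem.IsReduced, List.length_map, length_tilde]
  exact hlen

end FMK3
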